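/- Let c > 0 and let z_1, z_2 be distinct nonreal complex numbers, and suppose m̲_1, m̲_2 are nonzero complex numbers with m̲_1 ≠ m̲_2, m̲_i ≠ −1, satisfying z_i = −1/m̲_i + c/(1+m̲_i) for i = 1, 2, and set m_i = (m̲_i + (1−c)/z_i)/c. Then, provided all denominators below are nonzero, 2 / ( c z_1 z_2 [ (1+m̲_1)(1+m̲_2) − c m̲_1 m̲_2 ] ) − 2 m_1 m_2 / c = 2 ( z_2 m̲_2 − z_1 m̲_1 )² / ( c² z_1 z_2 (z_1 − z_2)(m̲_1 − m̲_2) ). -/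

import Mathlib

/-!
Write `P = (1 + mu₁)(1 + mu₂)` and `D = P - c mu₁ mu₂`. The defining equations give
`m_i = -1 / (z_i (1 + mu_i))`, `z₂ mu₂ - z₁ mu₁ = -c (mu₁ - mu₂) / P` and
`z₁ - z₂ = (mu₁ - mu₂) D / (mu₁ mu₂ P)`. After substitution both sides of the identity equal
`2 mu₁ mu₂ / (z₁ z₂ P D)`; the left side reduces to this by `1 / D - 1 / P = c mu₁ mu₂ / (P D)`.
-/

/-- The relation between `m` and its companion `mu` reduces to `m = -1 / (z (1 + mu))`. -/
lemma stieltjes_eq_of_companion {c z mu m : ℂ} (hc : c ≠ 0) (hz : z ≠ 0) (hmu : mu ≠ 0)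
    (hmu' : 1 + mu ≠ 0) (he : z = -1 / mu + c / (1 + mu))
    (hm : m = (mu + (1 - c) / z) / c) : m = -1 / (z * (1 + mu)) := by
  have h : z * mu * (1 + mu) = -(1 + mu) + c * mu := by
    rw [he]
    field_simp
  rw [hm]
  field_simp
  linear_combination h


/-- The algebraic identity between the two expressions for the limiting covariance
`Cov(X(z₁),X(z₂))`, derived from the Marčenko–Pastur equations
`z_i = -1/m̲_i + c/(1+m̲_i)` and `m_i = (m̲_i + (1-c)/z_i)/c`. -/
theorem limit_covariance_identity
    (c : ℝ) (hc : 0 < c) (z₁ z₂ mu₁ mu₂ : ℂ)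
    (hz₁ : z₁.im ≠ 0) (hz₂ : z₂.im ≠ 0) (hz : z₁ ≠ z₂)
    (hmu₁ : mu₁ ≠ 0) (hmu₂ : mu₂ ≠ 0) (hmu : mu₁ ≠ mu₂)
    (hmu₁' : mu₁ ≠ -1) (hmu₂' : mu₂ ≠ -1)
    (he₁ : z₁ = -1 / mu₁ + (c : ℂ) / (1 + mu₁))
    (he₂ : z₂ = -1 / mu₂ + (c : ℂ) / (1 + mu₂))
    (m₁ m₂ : ℂ)
    (hm₁ : m₁ = (mu₁ + (1 - (c : ℂ)) / z₁) / (c : ℂ))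
    (hm₂ : m₂ = (mu₂ + (1 - (c : ℂ)) / z₂) / (c : ℂ))
    (hden : (1 + mu₁) * (1 + mu₂) - (c : ℂ) * mu₁ * mu₂ ≠ 0) :
    2 / ((c : ℂ) * z₁ * z₂ * ((1 + mu₁) * (1 + mu₂) - (c : ℂ) * mu₁ * mu₂)) -
        2 * m₁ * m₂ / (c : ℂ) =
      2 * (z₂ * mu₂ - z₁ * mu₁) ^ 2 /
        ((c : ℂ) ^ 2 * z₁ * z₂ * (z₁ - z₂) * (mu₁ - mu₂)) := by
  have hc0 : (c : ℂ) ≠ 0 := by exact_mod_cast hc.ne'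
  have hz₁0 : z₁ ≠ 0 := by
    rintro rfl
    simp at hz₁
  have hz₂0 : z₂ ≠ 0 := by
    rintro rfl
    simp at hz₂
  have h₁ : 1 + mu₁ ≠ 0 := fun h => hmu₁' (by linear_combination h)
  have h₂ : 1 + mu₂ ≠ 0 := fun h => hmu₂' (by linear_combination h)
  have hd : mu₁ - mu₂ ≠ 0 := sub_ne_zero.mpr hmu
  have hM₁ := stieltjes_eq_of_companion hc0 hz₁0 hmu₁ h₁ he₁ hm₁
  have hM₂ := stieltjes_eq_of_companion hc0 hz₂0 hmu₂ h₂ he₂ hm₂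
  have hnum : z₂ * mu₂ - z₁ * mu₁ = -(c * (mu₁ - mu₂)) / ((1 + mu₁) * (1 + mu₂)) := by
    rw [he₁, he₂]
    field_simp
    ring
  have hdiff : z₁ - z₂ = (mu₁ - mu₂) * ((1 + mu₁) * (1 + mu₂) - c * mu₁ * mu₂) /
      (mu₁ * mu₂ * ((1 + mu₁) * (1 + mu₂))) := by
    rw [he₁, he₂]
    field_simp
    ring
  rw [hM₁, hM₂, hnum, hdiff]
  -- Naming `D` makes it an atom, so that `field_simp` can clear it using `hden`.
  obtain ⟨D, hD⟩ : ∃ D : ℂ, D = (1 + mu₁) * (1 + mu₂) - c * mu₁ * mu₂ := ⟨_, rfl⟩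
  rw [← hD] at hden ⊢
  field_simp
  linear_combination -hD
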